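/- Let N ≥ 1 be an integer, τ ∈ ℂ with Im τ > 0, and ξ, ζ ∈ ℂ generic (so that no denominator below vanishes). For integers a, b let S^{ab}(ξ,ζ,τ) = ( ϑ[(b−a)/N + 1/2, 1/2](ξ+ζ, Nτ) / ϑ[−a/N + 1/2, 1/2](ζ, Nτ) ) · ( ∏_{k=0, k≠b mod N}^{N−1} ϑ[k/N + 1/2, 1/2](ξ, Nτ) ) / ( ∏_{k=1}^{N−1} ϑ[k/N + 1/2, 1/2](0, Nτ) ), indices read modulo N. Then for all i, j ∈ {0,…,N−1} the following crossing identity holds: ∑_{k=0}^{N−1} S^{i−k, 0}(ξ, ζ, τ) · S^{j−k, 0}(−ξ−Nζ, ζ, τ) = ( ϑ[1/2,1/2](ξ, τ) · ϑ[1/2,1/2](−ξ−Nζ, τ) / ϑ[1/2,1/2](ζ, τ)² ) · δ_{ij}, where δ_{ij} is the Kronecker delta. -/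

import Mathlib

open Complex

/-- The Jacobi theta function with characteristics `(g1, g2)`:
`ϑ[g1,g2](ξ,τ) = ∑_{m∈ℤ} exp(iπ(m+g1)²τ + 2iπ(m+g1)(ξ+g2))`. -/
noncomputable def thetaChar (g1 g2 : ℝ) (xi tau : ℂ) : ℂ :=
  ∑' m : ℤ, Complex.exp ((Real.pi : ℂ) * I * ((m : ℂ) + (g1 : ℂ)) ^ 2 * tau
      + 2 * (Real.pi : ℂ) * I * ((m : ℂ) + (g1 : ℂ)) * (xi + (g2 : ℂ)))

/-- The nonvanishing entries `S^{ab}(ξ,ζ,τ)` of the ℤ_N-symmetric elliptic R-matrix,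
with indices `a, b` read modulo `N`:
`S^{ab} = (ϑ[(b−a)/N+1/2,1/2](ξ+ζ,Nτ)/ϑ[−a/N+1/2,1/2](ζ,Nτ))
  (∏_{k=0,k≠b mod N}^{N−1} ϑ[k/N+1/2,1/2](ξ,Nτ)) / (∏_{k=1}^{N−1} ϑ[k/N+1/2,1/2](0,Nτ))`. -/
noncomputable def Smat (N : ℕ) (xi zeta tau : ℂ) (a b : ℤ) : ℂ :=
  thetaChar (((b : ℝ) - (a : ℝ)) / N + 1 / 2) (1 / 2) (xi + zeta) ((N : ℂ) * tau)
    / thetaChar (-(a : ℝ) / N + 1 / 2) (1 / 2) zeta ((N : ℂ) * tau)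
    * (∏ k ∈ (Finset.range N).filter (fun k : ℕ => (k : ℤ) % (N : ℤ) ≠ b % (N : ℤ)),
        thetaChar ((k : ℝ) / N + 1 / 2) (1 / 2) xi ((N : ℂ) * tau))
    / ∏ k ∈ Finset.Icc 1 (N - 1),
        thetaChar ((k : ℝ) / N + 1 / 2) (1 / 2) 0 ((N : ℂ) * tau)

/-! ### Basic properties of theta functions with characteristics -/

lemma thetaChar_eq_jacobi (g h : ℝ) (x t : ℂ) :
    thetaChar g h x t = cexp (Real.pi * I * g ^ 2 * t + 2 * Real.pi * I * g * (x + h))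
      * jacobiTheta₂ (x + h + g * t) t := by
  unfold thetaChar jacobiTheta₂ jacobiTheta₂_term
  rw [← tsum_mul_left]
  refine tsum_congr fun m => ?_
  rw [← Complex.exp_add]
  congr 1
  ring

lemma thetaChar_summable (g h : ℝ) (x t : ℂ) (ht : 0 < t.im) :
    Summable (fun m : ℤ => Complex.exp ((Real.pi : ℂ) * I * ((m : ℂ) + (g : ℂ)) ^ 2 * t
      + 2 * (Real.pi : ℂ) * I * ((m : ℂ) + (g : ℂ)) * (x + (h : ℂ)))) := by
  have := ((summable_jacobiTheta₂_term_iff (x + h + g * t) t).mpr ht).mul_left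
    (cexp (Real.pi * I * g ^ 2 * t + 2 * Real.pi * I * g * (x + h)))
  refine this.congr fun m => ?_
  rw [jacobiTheta₂_term, ← Complex.exp_add]
  congr 1
  ring

lemma thetaChar_differentiable (g h : ℝ) (t : ℂ) (ht : 0 < t.im) :
    Differentiable ℂ (fun x => thetaChar g h x t) := by
  have h1 : Differentiable ℂ (fun z => jacobiTheta₂ z t) :=
    fun z => differentiableAt_jacobiTheta₂_fst z ht
  simp_rw [thetaChar_eq_jacobi]
  have h2 : Differentiable ℂ (fun x : ℂ => jacobiTheta₂ (x + h + g * t) t) :=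
    h1.comp (f := fun x : ℂ => x + h + g * t) (by fun_prop)
  fun_prop

lemma thetaChar_add_one_char (g h : ℝ) (x t : ℂ) :
    thetaChar (g + 1) h x t = thetaChar g h x t := by
  unfold thetaChar
  rw [← (Equiv.addRight (1 : ℤ)).tsum_eq
    (fun m : ℤ => Complex.exp ((Real.pi : ℂ) * I * ((m : ℂ) + (g : ℂ)) ^ 2 * t
      + 2 * (Real.pi : ℂ) * I * ((m : ℂ) + (g : ℂ)) * (x + (h : ℂ))))]
  refine tsum_congr fun m => ?_
  simp only [Equiv.coe_addRight]
  push_cast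
  congr 1
  ring

lemma thetaChar_shift (g h c : ℝ) (x t : ℂ) :
    thetaChar (g + c) h x t = cexp (Real.pi * I * c ^ 2 * t + 2 * Real.pi * I * c * (x + h))
      * thetaChar g h (x + c * t) t := by
  unfold thetaChar
  rw [← tsum_mul_left]
  refine tsum_congr fun m => ?_
  rw [← Complex.exp_add]
  push_cast
  congr 1
  ring

lemma exp_int_two_pi (m : ℤ) : cexp (2 * Real.pi * I * m) = 1 := by
  rw [Complex.exp_eq_one_iff]
  exact ⟨m, by ring⟩

lemma exp_congr_int {a b : ℂ} (m : ℤ) (h : a = b + 2 * Real.pi * I * m) : cexp a = cexp b := by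
  rw [h, Complex.exp_add, exp_int_two_pi, mul_one]

lemma exp_congr_int_neg {a b : ℂ} (m : ℤ) (h : a = b + Real.pi * I + 2 * Real.pi * I * m) :
    cexp a = - cexp b := by
  rw [h, Complex.exp_add, exp_int_two_pi, mul_one, Complex.exp_add, Complex.exp_pi_mul_I]
  ring

lemma thetaChar_add_one (g h : ℝ) (x t : ℂ) :
    thetaChar g h (x + 1) t = cexp (2 * Real.pi * I * g) * thetaChar g h x t := by
  unfold thetaChar
  rw [← tsum_mul_left]
  refine tsum_congr fun m => ?_
  rw [← Complex.exp_add]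
  refine exp_congr_int m ?_
  ring

lemma theta_odd (x t : ℂ) :
    thetaChar (1 / 2) (1 / 2) (-x) t = - thetaChar (1 / 2) (1 / 2) x t := by
  unfold thetaChar
  rw [← (Equiv.subLeft (-1 : ℤ)).tsum_eq, ← tsum_neg]
  refine tsum_congr fun m => ?_
  simp only [Equiv.subLeft_apply]
  refine exp_congr_int_neg (-m - 1) ?_
  push_cast
  ring

lemma theta_zero (t : ℂ) : thetaChar (1 / 2) (1 / 2) 0 t = 0 := by
  have := theta_odd 0 t
  rw [neg_zero] at this
  exact self_eq_neg.mp this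

/-- The reindexing used in the addition formula. -/
def parityMap : (ℤ × ℤ) ⊕ (ℤ × ℤ) → ℤ × ℤ
  | Sum.inl p => (p.1 + p.2, p.1 - p.2 - 1)
  | Sum.inr p => (p.1 + p.2, p.1 - p.2)

lemma parityMap_bijective : Function.Bijective parityMap := by
  constructor
  · rintro (⟨a, b⟩ | ⟨a, b⟩) (⟨c, d⟩ | ⟨c, d⟩) h <;>
      simp only [parityMap, Prod.mk.injEq] at h <;> simp <;> omega
  · rintro ⟨m, n⟩
    rcases Int.even_or_odd' (m - n) with ⟨k, hk | hk⟩
    · refine ⟨Sum.inr (n + k, k), ?_⟩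
      simp only [parityMap, Prod.mk.injEq]; omega
    · refine ⟨Sum.inl (n + k + 1, k), ?_⟩
      simp only [parityMap, Prod.mk.injEq]; omega

lemma HasSum.congr_fun' {ι : Type*} {f g : ι → ℂ} {a : ℂ} (h : HasSum f a) (e : ∀ i, g i = f i) :
    HasSum g a := by
  have : g = f := funext e
  rwa [this]

lemma hasSum_mul_int {f g : ℤ → ℂ} (hf : Summable f) (hg : Summable g) :
    HasSum (fun p : ℤ × ℤ => f p.1 * g p.2) ((∑' m, f m) * (∑' m, g m)) :=
  HasSum.mul hf.hasSum hg.hasSum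
    (summable_mul_of_summable_norm (f := f) (g := g) hf.norm hg.norm)

lemma theta_addition (x y w : ℂ) (hw : 0 < w.im) :
    thetaChar (1 / 2) (1 / 2) (x + y) w * thetaChar (1 / 2) (1 / 2) (x - y) w
      = thetaChar 0 0 (2 * x) (2 * w) * thetaChar (1 / 2) 0 (2 * y) (2 * w)
        - thetaChar (1 / 2) 0 (2 * x) (2 * w) * thetaChar 0 0 (2 * y) (2 * w) := by
  have hw2 : 0 < (2 * w).im := by simpa using hw
  have key : ∀ (g h g' h' : ℝ) (x y t : ℂ), 0 < t.im → HasSum (fun p : ℤ × ℤ =>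
      Complex.exp ((Real.pi : ℂ) * I * ((p.1 : ℂ) + (g : ℂ)) ^ 2 * t
      + 2 * (Real.pi : ℂ) * I * ((p.1 : ℂ) + (g : ℂ)) * (x + (h : ℂ))) *
      Complex.exp ((Real.pi : ℂ) * I * ((p.2 : ℂ) + (g' : ℂ)) ^ 2 * t
      + 2 * (Real.pi : ℂ) * I * ((p.2 : ℂ) + (g' : ℂ)) * (y + (h' : ℂ))))
      (thetaChar g h x t * thetaChar g' h' y t) := by
    intro g h g' h' x y t ht
    have s1 := thetaChar_summable g h x t ht
    have s2 := thetaChar_summable g' h' y t ht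
    exact hasSum_mul_int s1 s2
  have h0 := key (1/2) (1/2) (1/2) (1/2) (x + y) (x - y) w hw
  have h1 := key 0 0 (1/2) 0 (2 * x) (2 * y) (2 * w) hw2
  have h2 := (key (1/2) 0 0 0 (2 * x) (2 * y) (2 * w) hw2).neg
  rw [← (Equiv.ofBijective _ parityMap_bijective).hasSum_iff] at h0
  rw [sub_eq_add_neg]
  refine h0.unique (HasSum.sum (h1.congr_fun' ?_) (h2.congr_fun' ?_))
  · intro p
    simp only [Function.comp, Equiv.ofBijective_apply, parityMap]
    rw [← Complex.exp_add, ← Complex.exp_add]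
    refine exp_congr_int p.1 ?_
    push_cast
    ring
  · intro p
    simp only [Function.comp, Equiv.ofBijective_apply, parityMap]
    rw [← Complex.exp_add, ← Complex.exp_add]
    refine exp_congr_int_neg p.1 ?_
    push_cast
    ring

lemma theta_three_term (x y a b w : ℂ) (hw : 0 < w.im) :
    let θ := fun x => thetaChar (1 / 2) (1 / 2) x w
    (θ (x + y) * θ (x - y)) * (θ (a + b) * θ (a - b))
      = (θ (x + a) * θ (x - a)) * (θ (y + b) * θ (y - b))
        - (θ (x + b) * θ (x - b)) * (θ (y + a) * θ (y - a)) := by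
  intro θ
  simp only [θ]
  rw [theta_addition _ _ _ hw, theta_addition _ _ _ hw, theta_addition _ _ _ hw,
    theta_addition _ _ _ hw, theta_addition _ _ _ hw, theta_addition _ _ _ hw]
  ring

/-! ### The partial-fraction type identity -/

/-- The sum of residues identity in purely algebraic form. -/
lemma residue_sum (θ : ℂ → ℂ) (hd : Differentiable ℂ θ) (hodd : ∀ x, θ (-x) = - θ x)
    (h3 : ∀ x y a b, (θ (x + y) * θ (x - y)) * (θ (a + b) * θ (a - b))
      = (θ (x + a) * θ (x - a)) * (θ (y + b) * θ (y - b))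
        - (θ (x + b) * θ (x - b)) * (θ (y + a) * θ (y - a)))
    (a : ℕ → ℂ) (n : ℕ) : ∀ (s : Finset ℕ) (B : List ℂ), s.card = n → B.length = n →
      (∀ l ∈ s, ∀ m ∈ s, l ≠ m → θ (a l - a m) ≠ 0) → ∑ l ∈ s, a l = B.sum →
      ∑ l ∈ s, (B.map (fun b => θ (a l - b))).prod / ∏ m ∈ s.erase l, θ (a l - a m) = 0 := by
  have h0 : θ 0 = 0 := by
    have := hodd 0
    rw [neg_zero] at this
    exact self_eq_neg.mp this
  induction n with
  | zero =>
    intro s B hs _ _ _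
    rw [Finset.card_eq_zero] at hs
    simp [hs]
  | succ n ih =>
    intro s B hs hB hne hsum
    match B, hB with
    | [b], _ =>
      have hn : n = 0 := by simpa using ‹[b].length = n + 1›.symm
      subst hn
      obtain ⟨l, rfl⟩ := Finset.card_eq_one.mp hs
      have : a l = b := by simpa using hsum
      simp [this, h0]
    | [b, b'], _ =>
      have hn : n = 1 := by simpa using ‹[b, b'].length = n + 1›.symm
      subst hn
      obtain ⟨l, m, hlm, rfl⟩ := Finset.card_eq_two.mp hs
      have hab : a l + a m = b + b' := by simpa [Finset.sum_pair hlm] using hsum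
      have e1 : ({l, m} : Finset ℕ).erase l = {m} := by
        ext x; simp only [Finset.mem_erase, Finset.mem_insert, Finset.mem_singleton]; omega
      have e2 : ({l, m} : Finset ℕ).erase m = {l} := by
        ext x; simp only [Finset.mem_erase, Finset.mem_insert, Finset.mem_singleton]; omega
      rw [Finset.sum_pair hlm, e1, e2]
      simp only [List.map_cons, List.map_nil, List.prod_cons, List.prod_nil, mul_one,
        Finset.prod_singleton]
      have t1 : θ (a m - b) = - θ (a l - b') := by
        rw [← hodd]; congr 1; linear_combination hab
      have t2 : θ (a m - b') = - θ (a l - b) := by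
        rw [← hodd]; congr 1; linear_combination hab
      have t3 : θ (a m - a l) = - θ (a l - a m) := by
        rw [← hodd]; congr 1; ring
      have t4 := hne l (by simp) m (by simp) hlm
      rw [t1, t2, t3]
      field_simp
      ring
    | β :: β' :: b3 :: B', hB =>
      obtain ⟨i1, hi1, i2, hi2, h12⟩ : ∃ x ∈ s, ∃ y ∈ s, x ≠ y := by
        have : 1 < s.card := by rw [hs]; simp at hB; omega
        exact Finset.one_lt_card.mp this
      -- the coefficients
      set R : ℂ → ℕ → ℂ := fun c l =>
        θ (a l - (β + β' + b3 - c)) * (B'.map (fun b => θ (a l - b))).prod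
          / ∏ m ∈ s.erase l, θ (a l - a m) with hR
      set G : ℂ → ℂ → ℂ := fun c x => ∑ l ∈ s, (θ (a l - x) * θ (a l - (c - x))) * R c l with hG
      have red : ∀ i ∈ s, ∀ c, G c (a i) = 0 := by
        intro i hi c
        have := ih (s.erase i) ((c - a i) :: (β + β' + b3 - c) :: B')
          (by rw [Finset.card_erase_of_mem hi, hs]; rfl) (by simpa using hB)
          (fun l hl m hm hlm => hne l (Finset.mem_of_mem_erase hl) m (Finset.mem_of_mem_erase hm) hlm)
          (by
            have := Finset.add_sum_erase s a hi
            rw [hsum] at this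
            simp only [List.sum_cons] at this ⊢
            linear_combination this)
        rw [hG]
        simp only
        rw [← Finset.add_sum_erase s _ hi, sub_self, h0, zero_mul, zero_mul, zero_add, ← this]
        refine Finset.sum_congr rfl fun l hl => ?_
        have hli : l ≠ i := Finset.ne_of_mem_erase hl
        have hls := Finset.mem_of_mem_erase hl
        have hmem : i ∈ s.erase l := Finset.mem_erase.mpr ⟨hli.symm, hi⟩
        have hnz := hne l hls i hi hli
        rw [hR]
        simp only [List.map_cons, List.prod_cons]
        rw [← Finset.mul_prod_erase _ _ hmem, Finset.erase_right_comm]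
        rw [div_eq_mul_inv, div_eq_mul_inv, mul_inv]
        field_simp
      have key : ∀ c, θ (a i1 + a i2 - c) * G c β = 0 := by
        intro c
        have hnz := hne i1 hi1 i2 hi2 h12
        have e : θ (a i1 + a i2 - c) * θ (a i1 - a i2) * G c β
            = G c (a i1) * (θ (β + a i2 - c) * θ (β - a i2))
              - G c (a i2) * (θ (β + a i1 - c) * θ (β - a i1)) := by
          rw [hG]
          simp only
          rw [Finset.mul_sum, Finset.sum_mul, Finset.sum_mul, ← Finset.sum_sub_distrib]
          refine Finset.sum_congr rfl fun l _ => ?_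
          have := h3 (a l - c / 2) (β - c / 2) (a i1 - c / 2) (a i2 - c / 2)
          have q : ∀ u v : ℂ, u - c / 2 + (v - c / 2) = u + v - c := fun u v => by ring
          have q' : ∀ u v : ℂ, u - c / 2 - (v - c / 2) = u - v := fun u v => by ring
          simp only [q, q'] at this
          have q2 : ∀ u v : ℂ, u - (c - v) = u + v - c := fun u v => by ring
          simp only [q2]
          linear_combination this * R c l
        rw [red i1 hi1, red i2 hi2, zero_mul, zero_mul, sub_zero] at e
        have : θ (a i1 - a i2) * (θ (a i1 + a i2 - c) * G c β) = 0 := by rw [← e]; ring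
        exact (mul_eq_zero.mp this).resolve_left hnz
      have dG : Differentiable ℂ (fun c => G c β) := by
        rw [hG]
        simp only [hR]
        have d1 : ∀ u : ℂ, Differentiable ℂ (fun c : ℂ => θ (u - (c - β))) := fun u =>
          hd.comp (f := fun c : ℂ => u - (c - β)) (by fun_prop)
        have d2 : ∀ u : ℂ, Differentiable ℂ (fun c : ℂ => θ (u - (β + β' + b3 - c))) := fun u =>
          hd.comp (f := fun c : ℂ => u - (β + β' + b3 - c)) (by fun_prop)
        refine Differentiable.fun_sum fun l _ => ?_
        have := d1 (a l)
        have := d2 (a l)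
        simp only [div_eq_mul_inv]
        fun_prop
      have dT : Differentiable ℂ (fun c => θ (a i1 + a i2 - c)) :=
        hd.comp (f := fun c : ℂ => a i1 + a i2 - c) (by fun_prop)
      have alt := AnalyticOnNhd.eq_zero_or_eq_zero_of_mul_eq_zero (U := Set.univ)
        (f := fun c => θ (a i1 + a i2 - c)) (g := fun c => G c β)
        (fun z _ => dT.analyticAt z) (fun z _ => dG.analyticAt z)
        (fun z _ => key z) isPreconnected_univ
      rcases alt with h | h
      · exfalso
        have := h (2 * a i2) (Set.mem_univ _)
        refine hne i1 hi1 i2 hi2 h12 ?_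
        rw [← this]
        congr 1
        ring
      · have := h (β + β') (Set.mem_univ _)
        rw [← this, hG]
        simp only [hR, List.map_cons, List.prod_cons]
        refine Finset.sum_congr rfl fun l _ => ?_
        have r1 : β + β' - β = β' := by ring
        have r2 : β + β' + b3 - (β + β') = b3 := by ring
        rw [r1, r2]
        ring

/-! ### Uniqueness of quasi-periodic entire functions of degree one -/

lemma integral_shift (g : ℂ → ℂ) (hg : Differentiable ℂ g) (hp : ∀ z, g (z + 1) = g z) (τ : ℂ) :
    ∫ t in (0 : ℝ)..1, g (t + τ) = ∫ t in (0 : ℝ)..1, g t := by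
  have h1 := Complex.integral_boundary_rect_eq_zero_of_differentiableOn g 0 (1 + τ.im * I)
    hg.differentiableOn
  have hside : ∀ y : ℝ, g (1 + y * I) = g (y * I) := fun y => by rw [add_comm, hp]
  simp [hside] at h1
  have h2 : ∫ t in (0 : ℝ)..1, g (t + τ) = ∫ t in (0 : ℝ)..1, g (t + τ.im * I) := by
    have per : Function.Periodic (fun t : ℝ => g (t + τ.im * I)) 1 := by
      intro t
      simp only
      rw [← hp (t + τ.im * I)]
      congr 1
      push_cast
      ring
    have := per.intervalIntegral_add_eq τ.re 0
    rw [zero_add] at this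
    rw [← this]
    have e := intervalIntegral.integral_comp_add_right (a := 0) (b := 1)
      (fun t : ℝ => g (t + τ.im * I)) τ.re
    rw [zero_add, add_comm 1 τ.re] at e
    rw [← e]
    refine intervalIntegral.integral_congr fun t _ => ?_
    congr 1
    push_cast
    rw [add_assoc, Complex.re_add_im]
  rw [h2]
  exact (sub_eq_zero.mp h1).symm

lemma zero_of_coeff (F : ℂ → ℂ) (hF : Differentiable ℂ F) (τ : ℂ)
    (h1 : ∀ x, F (x + 1) = - F x)
    (hτ : ∀ x, F (x + τ) = cexp (-(Real.pi * I * τ) - 2 * Real.pi * I * (x + 1 / 2)) * F x)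
    (hc : ∫ t in (0 : ℝ)..1, F t * cexp (Real.pi * I * t) = 0) : ∀ x, F x = 0 := by
  set g : ℤ → ℂ → ℂ := fun n x => F x * cexp ((Real.pi * I - 2 * Real.pi * I * n) * x) with hg
  have gd : ∀ n, Differentiable ℂ (g n) := fun n => by rw [hg]; fun_prop
  have gp : ∀ n z, g n (z + 1) = g n z := by
    intro n z
    simp only [hg, h1]
    rw [exp_congr_int_neg (a := (Real.pi * I - 2 * Real.pi * I * n) * (z + 1))
      (b := (Real.pi * I - 2 * Real.pi * I * n) * z) (-n) (by push_cast; ring)]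
    ring
  set c : ℤ → ℂ := fun n => ∫ t in (0 : ℝ)..1, g n t with hcdef
  have hrec : ∀ n, ∃ κ : ℂ, κ ≠ 0 ∧ c n = κ * c (n + 1) := by
    intro n
    refine ⟨cexp (-(Real.pi * I * τ) - Real.pi * I + (Real.pi * I - 2 * Real.pi * I * n) * τ),
      Complex.exp_ne_zero _, ?_⟩
    simp only [hcdef]
    rw [← integral_shift (g n) (gd n) (gp n) τ, ← intervalIntegral.integral_const_mul]
    refine intervalIntegral.integral_congr fun t _ => ?_
    simp only [hg, hτ]
    rw [mul_comm (cexp _) (F t), mul_assoc, ← Complex.exp_add, mul_left_comm, ← Complex.exp_add]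
    congr 2
    push_cast
    ring
  have cz : c 0 = 0 := by
    rw [← hc]
    simp only [hcdef, hg]
    simp
  have call : ∀ n, c n = 0 := by
    intro n
    induction n using Int.induction_on with
    | zero => exact cz
    | succ k ih =>
      obtain ⟨κ, hκ, e⟩ := hrec k
      rw [ih] at e
      exact (mul_eq_zero.mp e.symm).resolve_left hκ
    | pred k ih =>
      obtain ⟨κ, hκ, e⟩ := hrec (-k - 1)
      rw [e, sub_add_cancel, ih, mul_zero]
  -- Fourier
  have per : Function.Periodic (fun t : ℝ => g 0 t) 1 := by
    intro t
    simp only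
    rw [← gp 0 t]
    push_cast
    rfl
  have cont : Continuous (per.lift : AddCircle (1 : ℝ) → ℂ) := by
    refine continuous_coinduced_dom.mpr ?_
    exact (gd 0).continuous.comp Complex.continuous_ofReal
  have : Fact ((0 : ℝ) < 1) := ⟨one_pos⟩
  set φ : C(AddCircle (1 : ℝ), ℂ) := ⟨per.lift, cont⟩ with hφ
  have coeff : ∀ n, fourierCoeff φ n = 0 := by
    intro n
    rw [fourierCoeff_eq_intervalIntegral φ n 0, zero_add]
    refine smul_eq_zero_of_right _ ?_
    rw [← call n]
    refine intervalIntegral.integral_congr fun t _ => ?_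
    simp only [hφ, ContinuousMap.coe_mk, Function.Periodic.lift_coe, hg, fourier_coe_apply,
      smul_eq_mul]
    rw [mul_left_comm, ← Complex.exp_add]
    congr 2
    push_cast
    ring
  have real0 : ∀ t : ℝ, F t = 0 := by
    intro t
    have hs : Summable (fourierCoeff φ) := by
      have : fourierCoeff φ = fun _ => 0 := funext coeff
      rw [this]
      exact summable_zero
    have := has_pointwise_sum_fourier_series_of_summable hs (t : AddCircle (1 : ℝ))
    simp only [coeff, zero_smul] at this
    have h0 := this.unique hasSum_zero
    simp only [hφ, ContinuousMap.coe_mk, Function.Periodic.lift_coe, hg] at h0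
    exact (mul_eq_zero.mp h0).resolve_right (Complex.exp_ne_zero _)
  have hfr : ∃ᶠ z in nhdsWithin (0 : ℂ) {0}ᶜ, F z = (fun _ => (0 : ℂ)) z := by
    have ht : Filter.Tendsto (fun t : ℝ => (t : ℂ)) (nhdsWithin 0 {0}ᶜ) (nhdsWithin 0 {0}ᶜ) := by
      refine tendsto_nhdsWithin_iff.mpr ⟨?_, ?_⟩
      · have := Complex.continuous_ofReal.tendsto (0 : ℝ)
        rw [Complex.ofReal_zero] at this
        exact this.mono_left nhdsWithin_le_nhds
      · filter_upwards [self_mem_nhdsWithin] with t ht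
        simpa using ht
    exact ht.frequently (Filter.Eventually.frequently (Filter.Eventually.of_forall real0))
  have := AnalyticOnNhd.eq_of_frequently_eq (f := F) (g := fun _ => 0)
    (fun z _ => hF.analyticAt z) (fun z _ => analyticAt_const) hfr
  exact fun x => congrFun this x

lemma proportional (F G : ℂ → ℂ) (hF : Differentiable ℂ F) (hG : Differentiable ℂ G) (τ : ℂ)
    (F1 : ∀ x, F (x + 1) = - F x)
    (Fτ : ∀ x, F (x + τ) = cexp (-(Real.pi * I * τ) - 2 * Real.pi * I * (x + 1 / 2)) * F x)
    (G1 : ∀ x, G (x + 1) = - G x)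
    (Gτ : ∀ x, G (x + τ) = cexp (-(Real.pi * I * τ) - 2 * Real.pi * I * (x + 1 / 2)) * G x)
    (x y : ℂ) : F x * G y = F y * G x := by
  set cF := ∫ t in (0 : ℝ)..1, F t * cexp (Real.pi * I * t) with hcF
  set cG := ∫ t in (0 : ℝ)..1, G t * cexp (Real.pi * I * t) with hcG
  by_cases h : cF = 0
  · have := zero_of_coeff F hF τ F1 Fτ h
    rw [this, this]; ring
  have H := zero_of_coeff (fun x => cG * F x - cF * G x) (by fun_prop) τ
    (fun x => by simp only [F1, G1]; ring) (fun x => by simp only [Fτ, Gτ]; ring) (by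
      have iF : IntervalIntegrable (fun t : ℝ => F t * cexp (Real.pi * I * t))
          MeasureTheory.volume 0 1 := by
        apply Continuous.intervalIntegrable
        have := hF.continuous
        fun_prop
      have iG : IntervalIntegrable (fun t : ℝ => G t * cexp (Real.pi * I * t))
          MeasureTheory.volume 0 1 := by
        apply Continuous.intervalIntegrable
        have := hG.continuous
        fun_prop
      have : ∀ t : ℝ, (cG * F t - cF * G t) * cexp (Real.pi * I * t)
          = cG * (F t * cexp (Real.pi * I * t)) - cF * (G t * cexp (Real.pi * I * t)) :=
        fun t => by ring
      simp only [this]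
      rw [intervalIntegral.integral_sub (iF.const_mul _) (iG.const_mul _),
        intervalIntegral.integral_const_mul, intervalIntegral.integral_const_mul]
      rw [← hcF, ← hcG]
      ring)
  have hx := H x
  have hy := H y
  have : cF * (F x * G y - F y * G x) = 0 := by linear_combination F y * hx - F x * hy
  exact sub_eq_zero.mp ((mul_eq_zero.mp this).resolve_left h)

/-! ### The functions with modulus `N τ` -/

/-- `ϑ[a/N + 1/2, 1/2](x, Nτ)`. -/
noncomputable def fth (N : ℕ) (τ : ℂ) (a : ℤ) (x : ℂ) : ℂ :=
  thetaChar ((a : ℝ) / N + 1 / 2) (1 / 2) x ((N : ℂ) * τ)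

/-- `ϑ[1/2, 1/2](x, w)`. -/
noncomputable def th (w x : ℂ) : ℂ := thetaChar (1 / 2) (1 / 2) x w

/-- A constant exponential factor. -/
noncomputable def ex (N : ℕ) (τ : ℂ) (a : ℤ) : ℂ :=
  cexp (Real.pi * I * a ^ 2 / N * τ + Real.pi * I * a / N)

lemma fth_periodic {N : ℕ} (hN : N ≠ 0) (τ : ℂ) (a : ℤ) (x : ℂ) :
    fth N τ (a + N) x = fth N τ a x := by
  unfold fth
  rw [← thetaChar_add_one_char ((a : ℝ) / N + 1 / 2)]
  congr 1
  push_cast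
  field_simp
  ring

lemma fth_eq {N : ℕ} (hN : N ≠ 0) (τ : ℂ) (a : ℤ) (x : ℂ) :
    fth N τ a x = ex N τ a * cexp (2 * Real.pi * I / N * a * x) * th (N * τ) (x + a * τ) := by
  unfold fth ex th
  rw [add_comm, thetaChar_shift, ← Complex.exp_add]
  have hN' : (N : ℂ) ≠ 0 := by exact_mod_cast hN
  congr 1
  · congr 1
    push_cast
    field_simp
    ring
  · congr 1
    push_cast
    field_simp

lemma fth_zero {N : ℕ} (τ : ℂ) (x : ℂ) : fth N τ 0 x = th (N * τ) x := by
  unfold fth th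
  simp

lemma ex_zero (N : ℕ) (τ : ℂ) : ex N τ 0 = 1 := by simp [ex]

lemma ex_ne_zero (N : ℕ) (τ : ℂ) (a : ℤ) : ex N τ a ≠ 0 := Complex.exp_ne_zero _

lemma fth_add_one {N : ℕ} (τ : ℂ) (a : ℤ) (x : ℂ) :
    fth N τ a (x + 1) = cexp (2 * Real.pi * I * (a / N + 1 / 2)) * fth N τ a x := by
  unfold fth
  rw [thetaChar_add_one]
  push_cast
  rfl

lemma fth_add_tau {N : ℕ} (hN : N ≠ 0) (τ : ℂ) (a : ℤ) (x : ℂ) :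
    fth N τ a (x + τ) = cexp ((-(Real.pi * I * τ) - 2 * Real.pi * I * (x + 1 / 2)) / N)
      * fth N τ (a + 1) x := by
  unfold fth
  have hN' : (N : ℂ) ≠ 0 := by exact_mod_cast hN
  have e : (((a + 1 : ℤ) : ℝ) / N + 1 / 2) = ((a : ℝ) / N + 1 / 2) + 1 / N := by
    push_cast; ring
  rw [e, thetaChar_shift ((a : ℝ) / N + 1 / 2) _ (1 / N), ← mul_assoc, ← Complex.exp_add]
  have e2 : x + ((1 / N : ℝ) : ℂ) * (N * τ) = x + τ := by
    push_cast; field_simp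
  rw [e2]
  have e3 : (-(Real.pi * I * τ) - 2 * Real.pi * I * (x + 1 / 2)) / N
      + (Real.pi * I * ((1 / N : ℝ) : ℂ) ^ 2 * (N * τ)
        + 2 * Real.pi * I * ((1 / N : ℝ) : ℂ) * (x + ((1 / 2 : ℝ) : ℂ))) = 0 := by
    push_cast; field_simp; ring
  rw [e3, Complex.exp_zero, one_mul]

lemma prod_shift_one (N : ℕ) (u : ℤ → ℂ) (hu : ∀ a, u (a + N) = u a) (c : ℤ) :
    ∏ m ∈ Finset.range N, u (m + (c + 1)) = ∏ m ∈ Finset.range N, u (m + c) := by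
  cases N with
  | zero => simp
  | succ n =>
    rw [Finset.prod_range_succ, Finset.prod_range_succ']
    congr 1
    · refine Finset.prod_congr rfl fun m _ => ?_
      congr 1; push_cast; ring
    · rw [← hu (((0 : ℕ) : ℤ) + c)]
      congr 1; push_cast; ring

lemma prod_shift (N : ℕ) (u : ℤ → ℂ) (hu : ∀ a, u (a + N) = u a) (c : ℤ) :
    ∏ m ∈ Finset.range N, u (m + c) = ∏ m ∈ Finset.range N, u m := by
  induction c using Int.induction_on with
  | zero => simp
  | succ k ih => rw [prod_shift_one N u hu, ih]
  | pred k ih =>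
    rw [← ih, ← prod_shift_one N u hu, sub_add_cancel]

lemma prod_reflect (N : ℕ) (u : ℤ → ℂ) (hu : ∀ a, u (a + N) = u a) (c : ℤ) :
    ∏ m ∈ Finset.range N, u (c - m) = ∏ m ∈ Finset.range N, u m := by
  rw [← prod_shift N u hu (c - N + 1), ← Finset.prod_range_reflect (fun m : ℕ => u (c - m))]
  refine Finset.prod_congr rfl fun m hm => ?_
  have := Finset.mem_range.mp hm
  congr 1
  omega

lemma sum_range_cast (N : ℕ) : (∑ m ∈ Finset.range N, (m : ℂ)) = N * (N - 1) / 2 := by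
  induction N with
  | zero => simp
  | succ n ih => rw [Finset.sum_range_succ, ih]; push_cast; ring

/-- The full product. -/
noncomputable def Pth (N : ℕ) (τ x : ℂ) : ℂ := ∏ m ∈ Finset.range N, fth N τ m x

lemma Pth_add_one {N : ℕ} (hN : N ≠ 0) (τ x : ℂ) : Pth N τ (x + 1) = - Pth N τ x := by
  have hN' : (N : ℂ) ≠ 0 := by exact_mod_cast hN
  unfold Pth
  simp only [fth_add_one]
  rw [Finset.prod_mul_distrib, ← Complex.exp_sum, ← Finset.mul_sum, Finset.sum_add_distrib,
    ← Finset.sum_div]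
  push_cast
  rw [sum_range_cast, exp_congr_int_neg (b := 0) (N - 1)]
  · simp
  · simp
    field_simp
    ring

lemma Pth_add_tau {N : ℕ} (hN : N ≠ 0) (τ x : ℂ) : Pth N τ (x + τ)
    = cexp (-(Real.pi * I * τ) - 2 * Real.pi * I * (x + 1 / 2)) * Pth N τ x := by
  have hN' : (N : ℂ) ≠ 0 := by exact_mod_cast hN
  unfold Pth
  simp only [fth_add_tau hN]
  rw [Finset.prod_mul_distrib, ← Complex.exp_sum,
    prod_shift N (fun a => fth N τ a x) (fun a => fth_periodic hN τ a x) 1]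
  congr 2
  simp
  field_simp

lemma th_odd (w x : ℂ) : th w (-x) = - th w x := theta_odd x w

lemma th_add_one (w x : ℂ) : th w (x + 1) = - th w x := by
  unfold th
  rw [thetaChar_add_one, exp_congr_int_neg (b := 0) 0]
  · simp
  · push_cast; ring

lemma th_add_tau (w x : ℂ) :
    th w (x + w) = cexp (-(Real.pi * I * w) - 2 * Real.pi * I * (x + 1 / 2)) * th w x := by
  unfold th
  rw [← thetaChar_add_one_char (1 / 2) (1 / 2) x w, thetaChar_shift, ← mul_assoc, ← Complex.exp_add]
  have : (-(Real.pi * I * w) - 2 * Real.pi * I * (x + 1 / 2))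
    + (Real.pi * I * ((1 : ℝ) : ℂ) ^ 2 * w
      + 2 * Real.pi * I * ((1 : ℝ) : ℂ) * (x + ((1 / 2 : ℝ) : ℂ))) = 0 := by
    push_cast; ring
  rw [this]
  simp

lemma im_pos {N : ℕ} (hN : N ≠ 0) {τ : ℂ} (hτ : 0 < τ.im) : 0 < ((N : ℂ) * τ).im := by
  have : (0 : ℝ) < N := by exact_mod_cast Nat.pos_of_ne_zero hN
  simp
  positivity

lemma product_formula {N : ℕ} (hN : N ≠ 0) {τ : ℂ} (hτ : 0 < τ.im) (x y : ℂ) :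
    Pth N τ x * th τ y = Pth N τ y * th τ x := by
  refine proportional (Pth N τ) (th τ) ?_ (thetaChar_differentiable _ _ _ hτ) τ
    (Pth_add_one hN τ) (Pth_add_tau hN τ) (th_add_one τ) (th_add_tau τ) x y
  unfold Pth
  have : ∀ m : ℕ, Differentiable ℂ (fun x => fth N τ m x) :=
    fun m => thetaChar_differentiable _ _ _ (im_pos hN hτ)
  fun_prop

/-! ### Assembling the crossing identity -/

/-- Periodic function equal to `fth a 0` off the multiples of `N`. -/
noncomputable def uz (N : ℕ) (τ : ℂ) (a : ℤ) : ℂ := if (N : ℤ) ∣ a then 1 else fth N τ a 0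

lemma uz_periodic {N : ℕ} (hN : N ≠ 0) (τ : ℂ) (a : ℤ) : uz N τ (a + N) = uz N τ a := by
  unfold uz
  rw [fth_periodic hN]
  simp

lemma not_dvd_sub {N l m : ℕ} (hl : l < N) (hm : m < N) (h : m ≠ l) : ¬ ((N : ℤ) ∣ (l : ℤ) - m) := by
  intro hd
  have := Int.eq_zero_of_abs_lt_dvd hd (by rw [abs_lt]; constructor <;> omega)
  omega

/-- The product of the theta constants. -/
noncomputable def Pz (N : ℕ) (τ : ℂ) : ℂ := ∏ m ∈ Finset.range N, uz N τ m

lemma prod_erase_left {N : ℕ} (hN : N ≠ 0) (τ : ℂ) {l : ℕ} (hl : l < N) :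
    ∏ m ∈ (Finset.range N).erase l, fth N τ ((l : ℤ) - m) 0 = Pz N τ := by
  rw [Pz, ← prod_reflect N (uz N τ) (uz_periodic hN τ) l,
    ← Finset.mul_prod_erase _ _ (Finset.mem_range.mpr hl)]
  have : uz N τ ((l : ℤ) - l) = 1 := by simp [uz]
  rw [this, one_mul]
  refine Finset.prod_congr rfl fun m hm => ?_
  rw [Finset.mem_erase, Finset.mem_range] at hm
  rw [uz, if_neg (not_dvd_sub hl hm.2 hm.1)]

lemma prod_erase_right {N : ℕ} (hN : N ≠ 0) (τ : ℂ) {l : ℕ} (hl : l < N) :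
    ∏ m ∈ (Finset.range N).erase l, fth N τ ((m : ℤ) - l) 0 = Pz N τ := by
  rw [Pz, ← prod_shift N (uz N τ) (uz_periodic hN τ) (-l),
    ← Finset.mul_prod_erase _ _ (Finset.mem_range.mpr hl)]
  have : uz N τ ((l : ℤ) + -l) = 1 := by simp [uz]
  rw [this, one_mul]
  refine Finset.prod_congr rfl fun m hm => ?_
  rw [Finset.mem_erase, Finset.mem_range] at hm
  rw [uz, ← sub_eq_add_neg, if_neg (not_dvd_sub hm.2 hl (Ne.symm hm.1))]

lemma range_erase_zero (N : ℕ) : (Finset.range N).erase 0 = Finset.Icc 1 (N - 1) := by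
  ext m
  simp only [Finset.mem_erase, Finset.mem_range, Finset.mem_Icc]
  omega

lemma Pz_eq {N : ℕ} (hN : N ≠ 0) (τ : ℂ) :
    Pz N τ = ∏ m ∈ Finset.Icc 1 (N - 1), fth N τ m 0 := by
  rw [← prod_erase_right hN τ (Nat.pos_of_ne_zero hN), range_erase_zero]
  simp

lemma ratio {N : ℕ} (hN : N ≠ 0) (τ : ℂ) (a : ℤ) (x z : ℂ) :
    fth N τ a (x + z) / fth N τ a z = cexp (2 * Real.pi * I / N * a * x)
      * (th (N * τ) (x + z + a * τ) / th (N * τ) (z + a * τ)) := by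
  rw [fth_eq hN, fth_eq hN, mul_add, Complex.exp_add]
  have h1 := ex_ne_zero N τ a
  have h2 := Complex.exp_ne_zero (2 * Real.pi * I / N * a * z)
  rw [mul_div_mul_comm]
  field_simp

/-- Ratio of products, both enumerations. -/
lemma prod_ratio {N : ℕ} (hN : N ≠ 0) (τ z : ℂ) (q : ℕ → ℤ) {l : ℕ} (hl : l < N) (hq : q l = 0) :
    (∏ m ∈ Finset.range N, fth N τ (q m) z) / ∏ m ∈ (Finset.range N).erase l, fth N τ (q m) 0
      = cexp (2 * Real.pi * I / N * (∑ m ∈ Finset.range N, (q m : ℂ)) * z)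
        * ((∏ m ∈ Finset.range N, th (N * τ) (z + q m * τ))
          / ∏ m ∈ (Finset.range N).erase l, th (N * τ) (q m * τ)) := by
  simp only [fth_eq hN]
  simp only [Finset.prod_mul_distrib, mul_zero, Complex.exp_zero, zero_add, mul_one]
  rw [← Complex.exp_sum]
  have e1 : ∏ m ∈ Finset.range N, ex N τ (q m)
      = ∏ m ∈ (Finset.range N).erase l, ex N τ (q m) := by
    rw [← Finset.mul_prod_erase _ _ (Finset.mem_range.mpr hl), hq, ex_zero, one_mul]
  have e2 : (∏ m ∈ (Finset.range N).erase l, ex N τ (q m)) ≠ 0 :=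
    Finset.prod_ne_zero_iff.mpr fun m _ => ex_ne_zero N τ _
  rw [e1, Finset.mul_sum, Finset.sum_mul, mul_assoc, mul_div_mul_left _ _ e2, mul_div_assoc]

/-- The theta form of the summand. -/
noncomputable def Zt (N : ℕ) (τ ξ η ζ : ℂ) (i j k : ℕ) : ℂ :=
  th (N * τ) (k * τ - (i * τ - ξ - ζ)) / th (N * τ) (k * τ - (i * τ - ζ))
    * (th (N * τ) (k * τ - (j * τ - η - ζ)) / th (N * τ) (k * τ - (j * τ - ζ)))
    * ((∏ m ∈ Finset.range N, th (N * τ) (k * τ - (m * τ - ζ)))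
      / ∏ m ∈ (Finset.range N).erase k, th (N * τ) (k * τ - m * τ))

lemma summand_eq {N : ℕ} (hN : N ≠ 0) (τ ξ ζ : ℂ) (i j k : ℕ) (hk : k < N) :
    (fth N τ ((k : ℤ) - i) (ξ + ζ) / fth N τ ((k : ℤ) - i) ζ)
      * (fth N τ ((k : ℤ) - j) ((-ξ - N * ζ) + ζ) / fth N τ ((k : ℤ) - j) ζ)
      * (Pth N τ ζ / Pz N τ)
    = cexp (2 * Real.pi * I / N * ((j - i) * ξ + j * N * ζ - (∑ m ∈ Finset.range N, (m : ℂ)) * ζ))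
      * Zt N τ ξ (-ξ - N * ζ) ζ i j k := by
  have hN' : (N : ℂ) ≠ 0 := by exact_mod_cast hN
  rw [ratio hN, ratio hN, ← prod_erase_left hN τ hk, Pth,
    ← prod_reflect N (fun a => fth N τ a ζ) (fun a => fth_periodic hN τ a ζ) k,
    prod_ratio hN τ ζ (fun m => (k : ℤ) - m) hk (by simp)]
  have hexp : cexp (2 * Real.pi * I / N * ((j - i) * ξ + j * N * ζ
        - (∑ m ∈ Finset.range N, (m : ℂ)) * ζ))
      = cexp (2 * Real.pi * I / N * (((k : ℤ) - i : ℤ) : ℂ) * ξ)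
        * cexp (2 * Real.pi * I / N * (((k : ℤ) - j : ℤ) : ℂ) * (-ξ - N * ζ))
        * cexp (2 * Real.pi * I / N * (∑ m ∈ Finset.range N, (((k : ℤ) - m : ℤ) : ℂ)) * ζ) := by
    rw [← Complex.exp_add, ← Complex.exp_add]
    congr 1
    push_cast
    rw [Finset.sum_sub_distrib]
    simp only [Finset.sum_const, Finset.card_range, nsmul_eq_mul]
    ring
  rw [hexp]
  unfold Zt
  have a1 : ∀ (u : ℂ) (m : ℕ), u + (((k : ℤ) - m : ℤ) : ℂ) * τ = k * τ - (m * τ - u) := by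
    intro u m; push_cast; ring
  have a2 : ∀ (m : ℕ), (((k : ℤ) - m : ℤ) : ℂ) * τ = k * τ - m * τ := by
    intro m; push_cast; ring
  have a3 : ∀ (m : ℕ) (u : ℂ), m * τ - (u + ζ) = m * τ - u - ζ := by
    intro m u; ring
  simp only [a1, a3]
  simp only [a2]
  ring

lemma th_ne_of_fth_ne {N : ℕ} (hN : N ≠ 0) {τ : ℂ} {a : ℤ} {x : ℂ} (h : fth N τ a x ≠ 0) :
    th (N * τ) (x + a * τ) ≠ 0 := by
  rw [fth_eq hN] at h
  exact right_ne_zero_of_mul h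

lemma th_residue {N : ℕ} (hN : N ≠ 0) {τ : ℂ} (hτ : 0 < τ.im) (a : ℕ → ℂ) (s : Finset ℕ)
    (B : List ℂ) (hB : B.length = s.card)
    (hne : ∀ l ∈ s, ∀ m ∈ s, l ≠ m → th (N * τ) (a l - a m) ≠ 0) (hsum : ∑ l ∈ s, a l = B.sum) :
    ∑ l ∈ s, (B.map (fun b => th (N * τ) (a l - b))).prod
      / ∏ m ∈ s.erase l, th (N * τ) (a l - a m) = 0 :=
  residue_sum (th (N * τ)) (thetaChar_differentiable _ _ _ (im_pos hN hτ)) (th_odd _)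
    (fun x y a b => theta_three_term x y a b _ (im_pos hN hτ)) a s.card s B rfl hB hne hsum

lemma const_ne {N : ℕ} (hN : N ≠ 0) {τ : ℂ} (hz : Pz N τ ≠ 0) {l m : ℕ} (hl : l < N) (hm : m < N)
    (h : l ≠ m) : th (N * τ) (l * τ - m * τ) ≠ 0 := by
  rw [← prod_erase_left hN τ hl, Finset.prod_ne_zero_iff] at hz
  have := th_ne_of_fth_ne hN (hz m (Finset.mem_erase.mpr ⟨h.symm, Finset.mem_range.mpr hm⟩))
  convert this using 2
  push_cast
  ring

lemma zeta_ne {N : ℕ} (hN : N ≠ 0) {τ ζ : ℂ} (hf : ∀ a, fth N τ a ζ ≠ 0) (l m : ℕ) :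
    th (N * τ) (l * τ - (m * τ - ζ)) ≠ 0 := by
  have := th_ne_of_fth_ne hN (hf ((l : ℤ) - m))
  convert this using 2
  push_cast
  ring

lemma alg_two {A B n1 n2 P D : ℂ} (h1 : n1 ≠ 0) (h2 : n2 ≠ 0) :
    A / n1 * (B / n2) * ((n1 * (n2 * P)) / D) = A * (B * P) / D := by
  by_cases hD : D = 0
  · simp [hD]
  · field_simp

lemma sum_offdiag {N : ℕ} (hN : N ≠ 0) {τ : ℂ} (hτ : 0 < τ.im) (ξ ζ : ℂ) (hz : Pz N τ ≠ 0)
    (hf : ∀ a, fth N τ a ζ ≠ 0) {i j : ℕ} (hi : i < N) (hj : j < N) (hij : i ≠ j) :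
    ∑ k ∈ Finset.range N, Zt N τ ξ (-ξ - N * ζ) ζ i j k = 0 := by
  have mi : i ∈ Finset.range N := Finset.mem_range.mpr hi
  have mj : j ∈ (Finset.range N).erase i :=
    Finset.mem_erase.mpr ⟨hij.symm, Finset.mem_range.mpr hj⟩
  set s' := ((Finset.range N).erase i).erase j with hs'
  have card1 := Finset.card_erase_add_one mi
  have card2 := Finset.card_erase_add_one mj
  rw [← hs'] at card2
  rw [Finset.card_range] at card1
  have key := th_residue hN hτ (fun m => m * τ) (Finset.range N)
    ((i * τ - ξ - ζ) :: (j * τ - (-ξ - N * ζ) - ζ) :: s'.toList.map (fun m : ℕ => m * τ - ζ))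
    (by
      simp only [List.length_cons, List.length_map, Finset.length_toList, Finset.card_range]
      omega)
    (fun l hl m hm h => const_ne hN hz (Finset.mem_range.mp hl) (Finset.mem_range.mp hm) h)
    (by
      simp only [List.sum_cons, Finset.sum_map_toList]
      rw [← Finset.add_sum_erase _ _ mi, ← Finset.add_sum_erase _ _ mj, ← hs',
        Finset.sum_sub_distrib]
      simp only [Finset.sum_const, nsmul_eq_mul]
      have : ((s'.card : ℕ) : ℂ) + 2 = N := by
        have : s'.card + 2 = N := by omega
        exact_mod_cast this
      rw [← this]
      ring)
  rw [← key]
  refine Finset.sum_congr rfl fun k _ => ?_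
  simp only [List.map_cons, List.prod_cons, List.map_map, Function.comp_def,
    Finset.prod_map_toList]
  unfold Zt
  rw [← Finset.mul_prod_erase _ _ mi, ← Finset.mul_prod_erase _ _ mj, ← hs']
  have n1 := zeta_ne hN hf k i
  have n2 := zeta_ne hN hf k j
  exact alg_two n1 n2

lemma sum_diag {N : ℕ} (hN : N ≠ 0) {τ : ℂ} (hτ : 0 < τ.im) (ξ ζ : ℂ) (hz : Pz N τ ≠ 0)
    (hf : ∀ a, fth N τ a ζ ≠ 0) {i : ℕ} (hi : i < N) :
    cexp (2 * Real.pi * I / N * (i * N * ζ - (∑ m ∈ Finset.range N, (m : ℂ)) * ζ))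
      * ∑ k ∈ Finset.range N, Zt N τ ξ (-ξ - N * ζ) ζ i i k
      = fth N τ 0 ξ * fth N τ 0 (-ξ - N * ζ) * (Pz N τ / Pth N τ ζ) := by
  have hN' : (N : ℂ) ≠ 0 := by exact_mod_cast hN
  have mi : i ∈ Finset.range N := Finset.mem_range.mpr hi
  set s' := (Finset.range N).erase i with hs'
  have card1 := Finset.card_erase_add_one mi
  rw [← hs'] at card1
  set a : ℕ → ℂ := fun m => if m < N then m * τ else i * τ - ζ with ha
  have aN : a N = i * τ - ζ := by simp [ha]
  have al : ∀ l, l < N → a l = l * τ := fun l hl => by simp [ha, hl]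
  have key := th_residue hN hτ a (Finset.range (N + 1))
    ((i * τ - ξ - ζ) :: (i * τ - (-ξ - N * ζ) - ζ) :: s'.toList.map (fun m : ℕ => m * τ - ζ))
    (by
      simp only [List.length_cons, List.length_map, Finset.length_toList, Finset.card_range]
      rw [Finset.card_range] at card1
      omega)
    (by
      intro l hl m hm h
      rw [Finset.mem_range] at hl hm
      by_cases hlN : l < N
      · by_cases hmN : m < N
        · rw [al l hlN, al m hmN]
          exact const_ne hN hz hlN hmN h
        · have : m = N := by omega
          rw [this, aN, al l hlN]
          exact zeta_ne hN hf l i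
      · have : l = N := by omega
        have hmN : m < N := by omega
        rw [this, aN, al m hmN, ← neg_sub, th_odd, neg_ne_zero]
        exact zeta_ne hN hf m i)
    (by
      simp only [List.sum_cons, Finset.sum_map_toList]
      rw [Finset.sum_range_succ, aN,
        Finset.sum_congr rfl (fun l hl => al l (Finset.mem_range.mp hl)),
        ← Finset.add_sum_erase _ _ mi, ← hs', Finset.sum_sub_distrib]
      simp only [Finset.sum_const, nsmul_eq_mul]
      have : ((s'.card : ℕ) : ℂ) + 1 = N := by
        rw [Finset.card_range] at card1
        exact_mod_cast card1
      rw [← this]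
      ring)
  simp only [List.map_cons, List.prod_cons, List.map_map, Function.comp_def,
    Finset.prod_map_toList] at key
  rw [Finset.sum_range_succ] at key
  have t1 : ∀ k ∈ Finset.range N,
      th (N * τ) (a k - (i * τ - ξ - ζ)) * (th (N * τ) (a k - (i * τ - (-ξ - N * ζ) - ζ))
        * ∏ m ∈ s', th (N * τ) (a k - (m * τ - ζ)))
        / ∏ m ∈ (Finset.range (N + 1)).erase k, th (N * τ) (a k - a m)
      = Zt N τ ξ (-ξ - N * ζ) ζ i i k := by
    intro k hk
    have hkN := Finset.mem_range.mp hk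
    have hset : (Finset.range (N + 1)).erase k = insert N ((Finset.range N).erase k) := by
      ext m
      simp only [Finset.mem_erase, Finset.mem_range, Finset.mem_insert]
      omega
    rw [hset, Finset.prod_insert (by simp), aN, al k hkN]
    have : ∏ m ∈ (Finset.range N).erase k, th (N * τ) (k * τ - a m)
        = ∏ m ∈ (Finset.range N).erase k, th (N * τ) (k * τ - m * τ) :=
      Finset.prod_congr rfl fun m hm => by
        rw [al m (Finset.mem_range.mp (Finset.mem_of_mem_erase hm))]
    rw [this]
    unfold Zt
    rw [← Finset.mul_prod_erase _ _ mi, ← hs']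
    have n1 := zeta_ne hN hf k i
    rw [div_eq_mul_inv (_ * (_ * _)), div_eq_mul_inv (_ * _) (Finset.prod _ _), mul_inv]
    field_simp
  rw [Finset.sum_congr rfl t1] at key
  have hsetN : (Finset.range (N + 1)).erase N = Finset.range N := by
    ext m
    simp only [Finset.mem_erase, Finset.mem_range]
    omega
  have e1 : a N - (i * τ - ξ - ζ) = ξ := by rw [aN]; ring
  have e2 : a N - (i * τ - (-ξ - N * ζ) - ζ) = -ξ - N * ζ := by rw [aN]; ring
  have e3 : ∏ m ∈ s', th (N * τ) (a N - (m * τ - ζ))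
      = (-1) ^ s'.card * ∏ m ∈ s', th (N * τ) ((((m : ℤ) - i : ℤ) : ℂ) * τ) := by
    rw [← Finset.prod_const, ← Finset.prod_mul_distrib]
    refine Finset.prod_congr rfl fun m _ => ?_
    rw [aN, neg_one_mul, ← th_odd]
    congr 1
    push_cast
    ring
  have e4 : ∏ m ∈ Finset.range N, th (N * τ) (a N - a m)
      = (-1) ^ N * ∏ m ∈ Finset.range N, th (N * τ) (ζ + (((m : ℤ) - i : ℤ) : ℂ) * τ) := by
    have hc : (-1 : ℂ) ^ N = ∏ _m ∈ Finset.range N, (-1 : ℂ) := by simp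
    rw [hc, ← Finset.prod_mul_distrib]
    refine Finset.prod_congr rfl fun m hm => ?_
    rw [aN, al m (Finset.mem_range.mp hm), neg_one_mul, ← th_odd]
    congr 1
    push_cast
    ring
  rw [hsetN, e1, e2, e3, e4] at key
  have pr := prod_ratio hN τ ζ (fun m => (m : ℤ) - i) hi (by simp)
  rw [prod_erase_right hN τ hi] at pr
  have ps := prod_shift N (fun a => fth N τ a ζ) (fun a => fth_periodic hN τ a ζ) (-i)
  simp only [← sub_eq_add_neg] at ps
  rw [ps] at pr
  change Pth N τ ζ / Pz N τ = _ at pr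
  have hexp : cexp (2 * Real.pi * I / N * (i * N * ζ - (∑ m ∈ Finset.range N, (m : ℂ)) * ζ))
      = (cexp (2 * Real.pi * I / N * (∑ m ∈ Finset.range N, (((m : ℤ) - i : ℤ) : ℂ)) * ζ))⁻¹ := by
    rw [← Complex.exp_neg]
    congr 1
    push_cast
    rw [Finset.sum_sub_distrib]
    simp only [Finset.sum_const, Finset.card_range, nsmul_eq_mul]
    ring
  rw [fth_zero, fth_zero, ← inv_div (Pth N τ ζ) (Pz N τ), pr, hexp, eq_neg_of_add_eq_zero_left key]
  have hcard : (-1 : ℂ) ^ N = (-1) ^ s'.card * (-1) := by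
    rw [← pow_succ, card1, Finset.card_range]
  have hpm : ((-1 : ℂ) ^ s'.card) ≠ 0 := pow_ne_zero _ (by norm_num)
  rw [hcard, mul_inv, inv_div]
  set X := ∏ m ∈ s', th (N * τ) ((((m : ℤ) - i : ℤ) : ℂ) * τ)
  set Y := ∏ m ∈ Finset.range N, th (N * τ) (ζ + (((m : ℤ) - i : ℤ) : ℂ) * τ)
  set p := (-1 : ℂ) ^ s'.card
  have : th (N * τ) ξ * (th (N * τ) (-ξ - N * ζ) * (p * X)) / (p * (-1) * Y)
      = - (th (N * τ) ξ * th (N * τ) (-ξ - N * ζ) * (X / Y)) := by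
    rw [mul_assoc p, show th (N * τ) ξ * (th (N * τ) (-ξ - N * ζ) * (p * X))
      = p * (th (N * τ) ξ * (th (N * τ) (-ξ - N * ζ) * X)) by ring, mul_div_mul_left _ _ hpm,
      neg_one_mul, div_neg]
    ring
  rw [this]
  ring

lemma Smat_eq {N : ℕ} (hN : N ≠ 0) (τ ξ ζ : ℂ) (i k : ℕ) :
    Smat N ξ ζ τ ((i : ℤ) - (k : ℤ)) 0
      = fth N τ ((k : ℤ) - i) (ξ + ζ) / fth N τ ((k : ℤ) - i) ζ
        * (∏ m ∈ Finset.Icc 1 (N - 1), fth N τ m ξ) / Pz N τ := by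
  have hs : (Finset.range N).filter (fun k : ℕ => (k : ℤ) % (N : ℤ) ≠ 0 % (N : ℤ))
      = Finset.Icc 1 (N - 1) := by
    ext m
    rw [Finset.mem_filter]
    simp only [Finset.mem_range, Finset.mem_Icc, Int.zero_emod]
    constructor
    · rintro ⟨h1, h2⟩
      have : m ≠ 0 := by rintro rfl; simp at h2
      omega
    · rintro ⟨h1, h2⟩
      refine ⟨by omega, ?_⟩
      rw [Int.emod_eq_of_lt (by omega) (by omega)]
      omega
  unfold Smat
  rw [hs, Pz_eq hN]
  unfold fth
  have e1 : ((0 : ℤ) : ℝ) - (((i : ℤ) - (k : ℤ) : ℤ) : ℝ) = (((k : ℤ) - i : ℤ) : ℝ) := by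
    push_cast; ring
  have e2 : -(((i : ℤ) - (k : ℤ) : ℤ) : ℝ) = (((k : ℤ) - i : ℤ) : ℝ) := by
    push_cast; ring
  rw [e1, e2]
  simp only [Int.cast_natCast]

lemma Pth_eq {N : ℕ} (hN : N ≠ 0) (τ x : ℂ) :
    Pth N τ x = fth N τ 0 x * ∏ m ∈ Finset.Icc 1 (N - 1), fth N τ m x := by
  rw [Pth, ← Finset.mul_prod_erase _ _ (Finset.mem_range.mpr (Nat.pos_of_ne_zero hN)),
    range_erase_zero]
  simp

/-- The crossing identity for the elliptic R-matrix entries: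
`∑_{k∈ℤ_N} S^{i−k,0}(ξ,ζ,τ) S^{j−k,0}(−ξ−Nζ,ζ,τ)
  = (ϑ[1/2,1/2](ξ,τ) ϑ[1/2,1/2](−ξ−Nζ,τ)/ϑ[1/2,1/2](ζ,τ)²) δ_{ij}`. -/
theorem stmt8 (N : ℕ) (hN : 1 ≤ N) (tau : ℂ) (htau : 0 < tau.im) (xi zeta : ℂ)
    (hden1 : ∀ a : ℤ, thetaChar (-((a : ℤ) : ℝ) / N + 1 / 2) (1 / 2) zeta ((N : ℂ) * tau) ≠ 0)
    (hden2 : ∏ k ∈ Finset.Icc 1 (N - 1),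
      thetaChar ((k : ℝ) / N + 1 / 2) (1 / 2) 0 ((N : ℂ) * tau) ≠ 0)
    (hden3 : thetaChar (1 / 2) (1 / 2) zeta tau ≠ 0)
    (i j : ℕ) (hi : i < N) (hj : j < N) :
    ∑ k ∈ Finset.range N,
        Smat N xi zeta tau ((i : ℤ) - (k : ℤ)) 0
          * Smat N (-xi - (N : ℂ) * zeta) zeta tau ((j : ℤ) - (k : ℤ)) 0
      = thetaChar (1 / 2) (1 / 2) xi tau
          * thetaChar (1 / 2) (1 / 2) (-xi - (N : ℂ) * zeta) tau
          / thetaChar (1 / 2) (1 / 2) zeta tau ^ 2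
        * (if i = j then 1 else 0) := by
  have hN0 : N ≠ 0 := by omega
  have hz : Pz N tau ≠ 0 := by
    rw [Pz_eq hN0]
    unfold fth
    simpa only [Int.cast_natCast] using hden2
  have hf : ∀ a, fth N tau a zeta ≠ 0 := by
    intro a
    have := hden1 (-a)
    unfold fth
    simpa only [Int.cast_neg, neg_neg] using this
  have hP : Pth N tau zeta ≠ 0 := Finset.prod_ne_zero_iff.mpr fun m _ => hf m
  change _ = th tau xi * th tau (-xi - N * zeta) / th tau zeta ^ 2 * _
  change th tau zeta ≠ 0 at hden3
  have e : ∀ k ∈ Finset.range N, Smat N xi zeta tau ((i : ℤ) - (k : ℤ)) 0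
          * Smat N (-xi - (N : ℂ) * zeta) zeta tau ((j : ℤ) - (k : ℤ)) 0
      = ((∏ m ∈ Finset.Icc 1 (N - 1), fth N tau m xi)
          * (∏ m ∈ Finset.Icc 1 (N - 1), fth N tau m (-xi - N * zeta)) / (Pz N tau * Pth N tau zeta))
        * (cexp (2 * Real.pi * I / N * ((j - i) * xi + j * N * zeta
          - (∑ m ∈ Finset.range N, (m : ℂ)) * zeta)) * Zt N tau xi (-xi - N * zeta) zeta i j k) := by
    intro k hk
    rw [← summand_eq hN0 tau xi zeta i j k (Finset.mem_range.mp hk), Smat_eq hN0, Smat_eq hN0]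
    have n1 := hf ((k : ℤ) - i)
    have n2 := hf ((k : ℤ) - j)
    field_simp
  rw [Finset.sum_congr rfl e, ← Finset.mul_sum, ← Finset.mul_sum]
  by_cases hij : i = j
  · subst hij
    rw [if_pos rfl, mul_one, sub_self, zero_mul, zero_add, sum_diag hN0 htau xi zeta hz hf hi]
    have q1 := product_formula hN0 htau xi zeta
    have q2 := product_formula hN0 htau (-xi - N * zeta) zeta
    have r1 : th tau xi / th tau zeta = Pth N tau xi / Pth N tau zeta := by
      rw [div_eq_div_iff hden3 hP, q1]; ring
    have r2 : th tau (-xi - N * zeta) / th tau zeta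
        = Pth N tau (-xi - N * zeta) / Pth N tau zeta := by
      rw [div_eq_div_iff hden3 hP, q2]; ring
    rw [sq, mul_div_mul_comm (th tau xi), r1, r2, Pth_eq hN0 tau xi, Pth_eq hN0 tau (-xi - N * zeta)]
    field_simp
  · rw [if_neg hij, mul_zero, sum_offdiag hN0 htau xi zeta hz hf hi hj hij, mul_zero, mul_zero]
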